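/- Let I ⊆ {1,…,n} have contiguous blocks B_1,…,B_k. The ℂ(v)-linear span in ℰ_n(v) of the elements g_w · (1 + g_{r_1}) ⋯ (1 + g_{r_k}) · ∏_{i∈I} e_i, taken over all w ∈ S_{n+1} and all choices of reflections (transpositions) r_j ∈ W_{B_j}, has dimension D_I over ℂ(v). -/

import Mathlib

noncomputable section

/-- The field `K = ℂ(v)` of rational functions over `ℂ`. -/
abbrev Kv : Type := RatFunc ℂ

/-- The variable `v ∈ ℂ(v)`. -/
noncomputable def vv : Kv := RatFunc.X

/-- The generator `g_i` of the free algebra (`.inl i ↦ g_i`). -/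
noncomputable def bgF (n : ℕ) (i : Fin n) : FreeAlgebra Kv (Fin n ⊕ Fin n) :=
  FreeAlgebra.ι Kv (Sum.inl i)

/-- The generator `e_i` of the free algebra (`.inr i ↦ e_i`). -/
noncomputable def beF (n : ℕ) (i : Fin n) : FreeAlgebra Kv (Fin n ⊕ Fin n) :=
  FreeAlgebra.ι Kv (Sum.inr i)

/-- Defining relations of the (type `A_n`) generalized algebra of braids and ties
`ℰ_n(v)`, for generators `g_1, …, g_n, e_1, …, e_n` (indexed here by `Fin n`,
with `|i − j|` rendered as `Nat.dist i j`). -/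
inductive BTRel (n : ℕ) :
    FreeAlgebra Kv (Fin n ⊕ Fin n) → FreeAlgebra Kv (Fin n ⊕ Fin n) → Prop
  | gg_comm (i j : Fin n) (h : 2 ≤ Nat.dist i j) :
      BTRel n (bgF n i * bgF n j) (bgF n j * bgF n i)
  | eg_comm (i j : Fin n) (h : 2 ≤ Nat.dist i j) :
      BTRel n (beF n i * bgF n j) (bgF n j * beF n i)
  | braid (i j : Fin n) (h : Nat.dist i j = 1) :
      BTRel n (bgF n i * bgF n j * bgF n i) (bgF n j * bgF n i * bgF n j)
  | egg (i j : Fin n) (h : Nat.dist i j = 1) :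
      BTRel n (beF n i * bgF n j * bgF n i) (bgF n j * bgF n i * beF n j)
  | ee_comm (i j : Fin n) :
      BTRel n (beF n i * beF n j) (beF n j * beF n i)
  | e_idem (i : Fin n) :
      BTRel n (beF n i * beF n i) (beF n i)
  | eg_same (i : Fin n) :
      BTRel n (beF n i * bgF n i) (bgF n i * beF n i)
  | eeg₁ (i j : Fin n) (h : Nat.dist i j = 1) :
      BTRel n (beF n i * beF n j * bgF n j) (beF n i * bgF n j * beF n i)
  | eeg₂ (i j : Fin n) (h : Nat.dist i j = 1) :
      BTRel n (beF n i * bgF n j * beF n i) (bgF n j * beF n i * beF n j)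
  | quad (i : Fin n) :
      BTRel n (bgF n i * bgF n i)
        (1 + (vv ^ 2 - 1) • (beF n i * (1 + bgF n i)))

/-- The generalized algebra of braids and ties `ℰ_n(v)` in type `A_n`. -/
abbrev BT (n : ℕ) := RingQuot (BTRel n)

/-- The generator `g_i` of `ℰ_n(v)`. -/
noncomputable def bg (n : ℕ) (i : Fin n) : BT n :=
  RingQuot.mkAlgHom Kv (BTRel n) (bgF n i)

/-- The generator `e_i` of `ℰ_n(v)`. -/
noncomputable def be (n : ℕ) (i : Fin n) : BT n :=
  RingQuot.mkAlgHom Kv (BTRel n) (beF n i)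

/-- The subalgebra `𝒞_n(v) ⊆ ℰ_n(v)` generated by `g_1, …, g_n`. -/
noncomputable def BTC (n : ℕ) : Subalgebra Kv (BT n) :=
  Algebra.adjoin Kv (Set.range (bg n))

open scoped Classical

/-- `B` is a contiguous block of `I ⊆ {1, …, n}` (subsets of `{1, …, n}` are modelled
as `Finset (Fin n)`): a maximal subset of `I` consisting of consecutive integers. -/
def IsBlock {n : ℕ} (I B : Finset (Fin n)) : Prop :=
  ∃ a b : Fin n, a ≤ b ∧ B = Finset.Icc a b ∧ B ⊆ I ∧
    (∀ c : Fin n, (c : ℕ) + 1 = (a : ℕ) → c ∉ I) ∧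
    (∀ c : Fin n, (b : ℕ) + 1 = (c : ℕ) → c ∉ I)

/-- The set of contiguous blocks of `I`. -/
noncomputable def blocksOf {n : ℕ} (I : Finset (Fin n)) : Finset (Finset (Fin n)) :=
  I.powerset.filter (fun B => IsBlock I B)

/-- `n_i(I)`: the number of contiguous blocks of `I` of size `i`. -/
noncomputable def nBlocks {n : ℕ} (I : Finset (Fin n)) (i : ℕ) : ℕ :=
  ((blocksOf I).filter (fun B => B.card = i)).card

/-- `N_I = (n+1 − Σ_i (i+1)·n_i(I))! · ∏_i ( n_i(I)! · ((i+1)!)^{n_i(I)} )`. -/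
noncomputable def NIval {n : ℕ} (I : Finset (Fin n)) : ℕ :=
  Nat.factorial (n + 1 - ∑ i ∈ Finset.range (n + 1), (i + 1) * nBlocks I i) *
    ∏ i ∈ Finset.range (n + 1),
      Nat.factorial (nBlocks I i) * Nat.factorial (i + 1) ^ nBlocks I i

/-- `j` is a descent of the permutation `w` of `{1, …, n+1}` (positions are indexed
by `Fin (n+1)`, the simple reflections `s_1, …, s_n` by `Fin n`):  `w(j) > w(j+1)`. -/
def IsDescent {n : ℕ} (w : Equiv.Perm (Fin (n + 1))) (j : Fin n) : Prop :=
  w j.succ < w j.castSucc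

/-- `D_I`: the number of permutations `w` of `{1, …, n+1}` such that every
contiguous block of `I` contains a descent of `w`. -/
noncomputable def DIval {n : ℕ} (I : Finset (Fin n)) : ℕ :=
  (Finset.univ.filter (fun w : Equiv.Perm (Fin (n + 1)) =>
    ∀ B ∈ blocksOf I, ∃ j ∈ B, IsDescent w j)).card

/-- The adjacent transposition `s_j = (j, j+1)` as a permutation of `Fin (n+1)`. -/
def sTrans {n : ℕ} (j : Fin n) : Equiv.Perm (Fin (n + 1)) :=
  Equiv.swap j.castSucc j.succ

/-- `l` is a reduced expression for `w`: the corresponding product of adjacent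
transpositions is `w`, and `l` has minimal length among all such words. -/
def IsReducedWord {n : ℕ} (w : Equiv.Perm (Fin (n + 1))) (l : List (Fin n)) : Prop :=
  (l.map sTrans).prod = w ∧
    ∀ l' : List (Fin n), (l'.map sTrans).prod = w → l.length ≤ l'.length

/-! After multiplication by the idempotent `e_I = ∏_{i ∈ I} e_i`, the generators `g_i` with
`i ∈ I` satisfy the quadratic relation of the Iwahori–Hecke algebra with parameter `v²`, so
`T_w ↦ g_w e_I` maps the Hecke algebra, viewed as the functions on `S_{n+1}`, into `ℰ_n(v)`. This
map is injective because `ℰ_n(v)` acts on the Hecke algebra, with every `e_i` acting as the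
identity.

For a transposition `r ∈ W_B`, right multiplication by `1 + T_r` produces functions whose
alternating sums over the cosets `w W_B` vanish, since each `T_i` with `i ∈ B` negates these sums.
The factors for distinct blocks commute, so the span lies in the common kernel of the alternating
coset sums of all the blocks. If `w` has no descent in some block `B`, then `w` is
lexicographically smallest in `w W_B`; hence a function in the common kernel is determined by its
values at the permutations with a descent in every block, and the dimension is at most `D_I`.

Conversely, if `m_j ∈ B_j` are descents of `w`, then the product of `T_{w s_{m_1} ⋯ s_{m_k}}` with
`(1 + T_{m_1}) ⋯ (1 + T_{m_k})` has leading term `T_w`, which gives `D_I` linearly independent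
elements.
-/

namespace BraidsAndTies

open Equiv Module

variable {n : ℕ}

section SimpleReflections

@[simp]
lemma sTrans_castSucc (i : Fin n) : sTrans i i.castSucc = i.succ :=
  swap_apply_left _ _

@[simp]
lemma sTrans_succ (i : Fin n) : sTrans i i.succ = i.castSucc :=
  swap_apply_right _ _

lemma sTrans_of_ne {i : Fin n} {p : Fin (n + 1)} (hcast : p ≠ i.castSucc) (hsucc : p ≠ i.succ) :
    sTrans i p = p :=
  swap_apply_of_ne_of_ne hcast hsucc

@[simp]
lemma mul_sTrans_mul_sTrans (w : Perm (Fin (n + 1))) (i : Fin n) :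
    w * sTrans i * sTrans i = w := by
  simp [sTrans, mul_assoc]

@[simp]
lemma inv_sTrans (i : Fin n) : (sTrans i)⁻¹ = sTrans i :=
  swap_inv _ _

lemma mul_sTrans_eq_iff {u w : Perm (Fin (n + 1))} {i : Fin n} :
    u * sTrans i = w ↔ u = w * sTrans i := by
  rw [← eq_mul_inv_iff_mul_eq, inv_sTrans]

lemma isSwap_sTrans (i : Fin n) : (sTrans i).IsSwap :=
  ⟨_, _, Fin.castSucc_lt_succ.ne, rfl⟩

lemma sTrans_ne_one (i : Fin n) : sTrans i ≠ 1 := fun h =>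
  Fin.castSucc_lt_succ.ne (by simpa using (DFunLike.congr_fun h i.succ))

lemma sTrans_lt_sTrans_iff {i : Fin n} {a b : Fin (n + 1)}
    (hab : ¬(a = i.castSucc ∧ b = i.succ)) (hba : ¬(a = i.succ ∧ b = i.castSucc)) :
    sTrans i a < sTrans i b ↔ a < b := by
  simp only [sTrans, swap_apply_def, Fin.lt_def, Fin.ext_iff, Fin.val_castSucc,
    Fin.val_succ] at *
  split_ifs <;> simp only [Fin.val_castSucc, Fin.val_succ] <;> omega

end SimpleReflections

lemma castSucc_eq_succ_or_of_dist_eq_one {i j : Fin n} (hij : Nat.dist i j = 1) :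
    j.castSucc = i.succ ∨ i.castSucc = j.succ := by
  simp only [Fin.ext_iff, Fin.val_castSucc, Fin.val_succ]
  unfold Nat.dist at hij
  omega

section BraidRelations

/-- The relations of the Artin braid group of type `A_n`, for a family of elements of a monoid. -/
structure BraidRelations {M : Type*} [Monoid M] (g : Fin n → M) : Prop where
  commute : ∀ {i j : Fin n}, 2 ≤ Nat.dist i j → Commute (g i) (g j)
  braid : ∀ {i j : Fin n}, Nat.dist i j = 1 → g i * g j * g i = g j * g i * g j

lemma BraidRelations.of_succ {M : Type*} [Monoid M] {g : Fin n → M}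
    (hcomm : ∀ {i j : Fin n}, 2 ≤ Nat.dist i j → Commute (g i) (g j))
    (hbraid : ∀ {i j : Fin n}, j.castSucc = i.succ → g i * g j * g i = g j * g i * g j) :
    BraidRelations g where
  commute := hcomm
  braid hij := (castSucc_eq_succ_or_of_dist_eq_one hij).elim hbraid fun h => (hbraid h).symm

lemma braidRelations_sTrans : BraidRelations (sTrans (n := n)) := by
  refine .of_succ (fun {i j} hij => ?_) fun {i j} hij => ?_
  · refine (Perm.disjoint_swap_swap ?_).commute
    unfold Nat.dist at hij
    simp [Fin.ext_iff]
    omega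
  · have hne : i.castSucc ≠ j.succ := by
      have hval := Fin.ext_iff.1 hij
      simp only [ne_eq, Fin.ext_iff, Fin.val_castSucc, Fin.val_succ] at hval ⊢
      omega
    have hi : i.castSucc ≠ i.succ := Fin.castSucc_lt_succ.ne
    have hj : j.succ ≠ i.succ := hij ▸ Fin.castSucc_lt_succ.ne'
    calc sTrans i * sTrans j * sTrans i
        = swap i.succ i.castSucc * swap j.succ i.succ * swap i.succ i.castSucc := by
          simp only [sTrans, hij, swap_comm]
      _ = swap j.succ i.castSucc := by
          rw [swap_mul_swap_mul_swap hj hne.symm, swap_comm]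
      _ = sTrans j * sTrans i * sTrans j := by
          simp only [sTrans, hij, swap_mul_swap_mul_swap hi hne]

end BraidRelations

section Descents

lemma not_isDescent_iff {w : Perm (Fin (n + 1))} {i : Fin n} :
    ¬IsDescent w i ↔ w i.castSucc < w i.succ :=
  not_lt.trans (w.injective.ne Fin.castSucc_lt_succ.ne).le_iff_lt

lemma isDescent_mul_sTrans_self {w : Perm (Fin (n + 1))} {i : Fin n} :
    IsDescent (w * sTrans i) i ↔ ¬IsDescent w i := by
  rw [not_isDescent_iff]
  simp [IsDescent]

lemma isDescent_mul_sTrans_of_dist {w : Perm (Fin (n + 1))} {i j : Fin n}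
    (hij : 2 ≤ Nat.dist i j) : IsDescent (w * sTrans i) j ↔ IsDescent w j := by
  unfold Nat.dist at hij
  unfold IsDescent
  rw [Perm.mul_apply, Perm.mul_apply, sTrans_of_ne, sTrans_of_ne] <;>
    simp only [ne_eq, Fin.ext_iff, Fin.val_castSucc, Fin.val_succ] <;> omega

lemma sTrans_of_castSucc_eq_succ {i j : Fin n} (hij : j.castSucc = i.succ) :
    sTrans i j.succ = j.succ ∧ sTrans j i.castSucc = i.castSucc := by
  simp only [Fin.ext_iff, Fin.val_castSucc, Fin.val_succ] at hij
  constructor <;> refine sTrans_of_ne ?_ ?_ <;>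
    simp only [ne_eq, Fin.ext_iff, Fin.val_castSucc, Fin.val_succ] <;> omega

lemma _root_.IsDescent.mul_sTrans_of_dist_eq_one {w : Perm (Fin (n + 1))} {i j : Fin n}
    (hij : Nat.dist i j = 1) (hi : IsDescent w i) (hj : IsDescent w j) :
    IsDescent (w * sTrans i) j ∧ IsDescent (w * sTrans i * sTrans j) i := by
  unfold IsDescent at *
  simp only [Perm.mul_apply]
  rcases castSucc_eq_succ_or_of_dist_eq_one hij with h | h
  · obtain ⟨hi_fix, hj_fix⟩ := sTrans_of_castSucc_eq_succ h
    have hj_move : sTrans j i.succ = j.succ := h ▸ sTrans_castSucc j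
    rw [h] at hj ⊢
    simp only [hi_fix, hj_fix, hj_move, sTrans_succ, sTrans_castSucc]
    exact ⟨hj.trans hi, hj⟩
  · obtain ⟨hj_fix, hi_fix⟩ := sTrans_of_castSucc_eq_succ h
    have hj_move : sTrans j i.castSucc = j.castSucc := h ▸ sTrans_succ j
    rw [← h] at hj ⊢
    simp only [hi_fix, hj_fix, hj_move, sTrans_succ, sTrans_castSucc]
    exact ⟨hi.trans hj, hj⟩

lemma eq_one_of_forall_not_isDescent {w : Perm (Fin (n + 1))} (hw : ∀ i, ¬IsDescent w i) :
    w = 1 := by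
  have hmono : StrictMono w := Fin.strictMono_iff_lt_succ.2 fun i => not_isDescent_iff.1 (hw i)
  exact DFunLike.coe_injective <| (hmono.range_inj strictMono_id).1 <| by simp

end Descents

section Inversions

/-- The inversions of `w`, as pairs of positions. -/
def inversions (w : Perm (Fin (n + 1))) : Finset (Fin (n + 1) × Fin (n + 1)) :=
  {p | p.1 < p.2 ∧ w p.2 < w p.1}

lemma mem_inversions {w : Perm (Fin (n + 1))} {a b : Fin (n + 1)} :
    (a, b) ∈ inversions w ↔ a < b ∧ w b < w a := by
  simp [inversions]

/-- The number of inversions, which is the Coxeter length (see `isReducedWord_iff`). -/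
def numInversions (w : Perm (Fin (n + 1))) : ℕ := (inversions w).card

lemma numInversions_one : numInversions (1 : Perm (Fin (n + 1))) = 0 := by
  refine Finset.card_eq_zero.2 (Finset.filter_eq_empty_iff.2 ?_)
  exact fun _ _ h => lt_asymm h.1 h.2

lemma inversions_mul_sTrans {w : Perm (Fin (n + 1))} {i : Fin n} (hi : ¬IsDescent w i) :
    inversions (w * sTrans i) = insert (i.castSucc, i.succ)
      ((inversions w).map ((sTrans i).prodCongr (sTrans i)).toEmbedding) := by
  rw [not_isDescent_iff] at hi
  ext ⟨a, b⟩
  have hsymm : (sTrans i).symm = sTrans i := inv_sTrans i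
  simp only [Finset.mem_insert, Finset.mem_map_equiv, prodCongr_symm, prodCongr_apply, Prod.map,
    mem_inversions, Perm.mul_apply, hsymm, Prod.mk.injEq]
  by_cases hab : a = i.castSucc ∧ b = i.succ
  · obtain ⟨rfl, rfl⟩ := hab
    simp [hi]
  · simp only [hab, false_or, and_congr_left_iff]
    intro hinv
    refine (sTrans_lt_sTrans_iff hab ?_).symm
    rintro ⟨rfl, rfl⟩
    exact hi.asymm (by simpa using hinv)

lemma numInversions_mul_sTrans_of_not_isDescent {w : Perm (Fin (n + 1))} {i : Fin n}
    (hi : ¬IsDescent w i) : numInversions (w * sTrans i) = numInversions w + 1 := by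
  have hsymm : (sTrans i).symm = sTrans i := inv_sTrans i
  rw [numInversions, inversions_mul_sTrans hi, Finset.card_insert_of_notMem, Finset.card_map,
    numInversions]
  simp [Finset.mem_map_equiv, mem_inversions, hsymm, Fin.castSucc_lt_succ.not_gt]

lemma _root_.IsDescent.numInversions_eq {w : Perm (Fin (n + 1))} {i : Fin n}
    (hi : IsDescent w i) : numInversions w = numInversions (w * sTrans i) + 1 := by
  simpa using numInversions_mul_sTrans_of_not_isDescent
    (w := w * sTrans i) (i := i) (by rwa [isDescent_mul_sTrans_self, not_not])

lemma numInversions_le_mul_sTrans_add_one (w : Perm (Fin (n + 1))) (i : Fin n) :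
    numInversions w ≤ numInversions (w * sTrans i) + 1 := by
  by_cases hi : IsDescent w i
  · exact hi.numInversions_eq.le
  · rw [numInversions_mul_sTrans_of_not_isDescent hi]
    omega

end Inversions

section ReducedWords

lemma descentInduction {P : Perm (Fin (n + 1)) → Prop} (one : P 1)
    (mul_sTrans : ∀ w i, ¬IsDescent w i → P w → P (w * sTrans i)) (w : Perm (Fin (n + 1))) :
    P w := by
  induction hN : numInversions w using Nat.strong_induction_on generalizing w with
  | _ N ih =>
    by_cases hw : ∃ i, IsDescent w i
    · obtain ⟨i, hi⟩ := hw
      have hlt : numInversions (w * sTrans i) < N := by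
        rw [← hN, hi.numInversions_eq]
        exact Nat.lt_succ_self _
      simpa using mul_sTrans (w * sTrans i) i (by rwa [isDescent_mul_sTrans_self, not_not])
        (ih _ hlt _ rfl)
    · rwa [eq_one_of_forall_not_isDescent (not_exists.1 hw)]

/-- The product of the simple reflections indexed by the letters of a word. -/
def wordProd (l : List (Fin n)) : Perm (Fin (n + 1)) := (l.map sTrans).prod

@[simp]
lemma wordProd_nil : wordProd ([] : List (Fin n)) = 1 := rfl

@[simp]
lemma wordProd_append (l l' : List (Fin n)) : wordProd (l ++ l') = wordProd l * wordProd l' := by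
  simp [wordProd]

@[simp]
lemma wordProd_singleton (i : Fin n) : wordProd [i] = sTrans i := by
  simp [wordProd]

lemma numInversions_wordProd_le (l : List (Fin n)) : numInversions (wordProd l) ≤ l.length := by
  induction l using List.reverseRecOn with
  | nil => exact numInversions_one.le
  | append_singleton l i ih =>
    have hstep := numInversions_le_mul_sTrans_add_one (wordProd l * sTrans i) i
    rw [mul_sTrans_mul_sTrans] at hstep
    simp only [wordProd_append, wordProd_singleton, List.length_append, List.length_singleton]
    omega

lemma exists_wordProd_eq (w : Perm (Fin (n + 1))) :
    ∃ l : List (Fin n), wordProd l = w ∧ l.length = numInversions w := by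
  induction w using descentInduction with
  | one => exact ⟨[], rfl, numInversions_one.symm⟩
  | mul_sTrans w i hi ih =>
    obtain ⟨l, rfl, hlen⟩ := ih
    exact ⟨l ++ [i], by simp, by simp [numInversions_mul_sTrans_of_not_isDescent hi, hlen]⟩

lemma isReducedWord_iff {w : Perm (Fin (n + 1))} {l : List (Fin n)} :
    IsReducedWord w l ↔ wordProd l = w ∧ l.length = numInversions w := by
  refine and_congr_right fun hl => ⟨fun hmin => le_antisymm ?_ ?_, fun hlen l' hl' => ?_⟩
  · obtain ⟨l', hl', hlen'⟩ := exists_wordProd_eq w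
    exact hlen' ▸ hmin l' hl'
  · exact hl ▸ numInversions_wordProd_le l
  · exact hlen ▸ hl' ▸ numInversions_wordProd_le l'

lemma exists_isReducedWord (w : Perm (Fin (n + 1))) : ∃ l, IsReducedWord w l :=
  (exists_wordProd_eq w).imp fun _ => isReducedWord_iff.2

lemma isReducedWord_concat_iff {w : Perm (Fin (n + 1))} {l : List (Fin n)} {i : Fin n} :
    IsReducedWord w (l ++ [i]) ↔ IsDescent w i ∧ IsReducedWord (w * sTrans i) l := by
  simp only [isReducedWord_iff, wordProd_append, wordProd_singleton, List.length_append,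
    List.length_singleton, mul_sTrans_eq_iff]
  constructor
  · rintro ⟨hl, hlen⟩
    have hle : numInversions (w * sTrans i) ≤ l.length := hl ▸ numInversions_wordProd_le l
    have hi : IsDescent w i := by
      by_contra hi
      rw [numInversions_mul_sTrans_of_not_isDescent hi] at hle
      omega
    exact ⟨hi, hl, by rw [hi.numInversions_eq] at hlen; omega⟩
  · rintro ⟨hi, hl, hlen⟩
    exact ⟨hl, by rw [hlen, hi.numInversions_eq]⟩

lemma isReducedWord_nil_iff {w : Perm (Fin (n + 1))} : IsReducedWord w [] ↔ w = 1 := by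
  rw [isReducedWord_iff]
  exact ⟨fun h => h.1.symm, fun h => h ▸ ⟨rfl, numInversions_one.symm⟩⟩

lemma isReducedWord_singleton (i : Fin n) : IsReducedWord (sTrans i) [i] := by
  refine isReducedWord_concat_iff (l := []).2 ⟨?_, isReducedWord_nil_iff.2 ?_⟩
  · simp [IsDescent]
  · simpa using mul_sTrans_mul_sTrans 1 i

variable {M : Type*} [Monoid M] {g : Fin n → M}

/- Below two distinct descents `i`, `j` of `w`, the word `w` can be written as a reduced word ending
in the longest element of the rank two parabolic subgroup generated by `s_i` and `s_j`. -/
lemma BraidRelations.exists_prod_concat_eq (hg : BraidRelations g) {w : Perm (Fin (n + 1))}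
    {i j : Fin n} (hi : IsDescent w i) (hj : IsDescent w j) :
    ∃ l l', IsReducedWord w (l ++ [i]) ∧ IsReducedWord w (l' ++ [j]) ∧
      ((l ++ [i]).map g).prod = ((l' ++ [j]).map g).prod := by
  rcases eq_or_ne i j with rfl | hne
  · obtain ⟨l, hl⟩ := exists_isReducedWord (w * sTrans i)
    have hli := isReducedWord_concat_iff.2 ⟨hi, hl⟩
    exact ⟨l, l, hli, hli, rfl⟩
  have hdist : 2 ≤ Nat.dist i j ∨ Nat.dist i j = 1 := by
    rw [Fin.ne_iff_vne] at hne
    unfold Nat.dist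
    omega
  rcases hdist with hfar | hadj
  · obtain ⟨l, hl⟩ := exists_isReducedWord (w * sTrans i * sTrans j)
    have hl' : IsReducedWord (w * sTrans j * sTrans i) l := by
      rwa [mul_assoc, ← (braidRelations_sTrans.commute hfar).eq, ← mul_assoc]
    refine ⟨l ++ [j], l ++ [i], ?_, ?_, ?_⟩
    · simp only [isReducedWord_concat_iff]
      exact ⟨hi, (isDescent_mul_sTrans_of_dist hfar).2 hj, hl⟩
    · simp only [isReducedWord_concat_iff]
      exact ⟨hj, (isDescent_mul_sTrans_of_dist (Nat.dist_comm _ _ ▸ hfar)).2 hi, hl'⟩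
    · simp [(hg.commute hfar).eq]
  · obtain ⟨l, hl⟩ := exists_isReducedWord (w * sTrans i * sTrans j * sTrans i)
    have hl' : IsReducedWord (w * sTrans j * sTrans i * sTrans j) l := by
      have hbraid := braidRelations_sTrans.braid hadj
      simp only [mul_assoc] at hbraid hl ⊢
      rwa [← hbraid]
    obtain ⟨hij, hiji⟩ := hi.mul_sTrans_of_dist_eq_one hadj hj
    obtain ⟨hji, hjij⟩ := hj.mul_sTrans_of_dist_eq_one (Nat.dist_comm _ _ ▸ hadj) hi
    refine ⟨l ++ [i] ++ [j], l ++ [j] ++ [i], ?_, ?_, ?_⟩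
    · simp only [isReducedWord_concat_iff]
      exact ⟨hi, hij, hiji, hl⟩
    · simp only [isReducedWord_concat_iff]
      exact ⟨hj, hji, hjij, hl'⟩
    · have hbraid := hg.braid hadj
      simp only [mul_assoc] at hbraid
      simp [hbraid]

/-- **Matsumoto's theorem** for the symmetric group. -/
theorem BraidRelations.prod_map_eq (hg : BraidRelations g) {w : Perm (Fin (n + 1))}
    {l l' : List (Fin n)} (hl : IsReducedWord w l) (hl' : IsReducedWord w l') :
    (l.map g).prod = (l'.map g).prod := by
  induction hN : l.length using Nat.strong_induction_on generalizing w l l' with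
  | _ N ih =>
    have hlen : l.length = l'.length := le_antisymm (hl.2 l' hl'.1) (hl'.2 l hl.1)
    rcases l.eq_nil_or_concat' with rfl | ⟨l, i, rfl⟩
    · rw [List.length_eq_zero_iff.1 hlen.symm]
    obtain ⟨l', j, rfl⟩ := l'.eq_nil_or_concat'.resolve_left (by rintro rfl; simp at hlen)
    obtain ⟨hi, hl⟩ := isReducedWord_concat_iff.1 hl
    obtain ⟨hj, hl'⟩ := isReducedWord_concat_iff.1 hl'
    obtain ⟨m, m', hm, hm', hmm'⟩ := hg.exists_prod_concat_eq hi hj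
    simp only [List.length_append, List.length_singleton] at hN hlen
    have hlm := ih l.length (by omega) hl (isReducedWord_concat_iff.1 hm).2 rfl
    have hlm' := ih l'.length (by omega) hl' (isReducedWord_concat_iff.1 hm').2 rfl
    simp only [List.map_append, List.prod_append] at hmm' ⊢
    rw [hlm, hmm', hlm']

end ReducedWords

section HeckeOperators

variable {K : Type*} [CommRing K] (q : K)

/-- Right multiplication by the generator `T_i` of the Iwahori–Hecke algebra with parameter `q`,
where `f` stands for the element `∑ w, f w • T_w`. -/
def heckeOp (i : Fin n) : Module.End K (Perm (Fin (n + 1)) → K) where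
  toFun f w := if IsDescent w i then (q - 1) * f w + f (w * sTrans i) else q * f (w * sTrans i)
  map_add' f f' := by
    ext w
    simp only [Pi.add_apply]
    split_ifs <;> ring
  map_smul' c f := by
    ext w
    simp only [Pi.smul_apply, smul_eq_mul, RingHom.id_apply]
    split_ifs <;> ring

lemma heckeOp_apply (i : Fin n) (f : Perm (Fin (n + 1)) → K) (w : Perm (Fin (n + 1))) :
    heckeOp q i f w =
      if IsDescent w i then (q - 1) * f w + f (w * sTrans i) else q * f (w * sTrans i) := rfl

lemma heckeOp_apply_of_isDescent {w : Perm (Fin (n + 1))} {i : Fin n} (hi : IsDescent w i)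
    (f : Perm (Fin (n + 1)) → K) : heckeOp q i f w = (q - 1) * f w + f (w * sTrans i) :=
  if_pos hi

lemma heckeOp_apply_of_not_isDescent {w : Perm (Fin (n + 1))} {i : Fin n} (hi : ¬IsDescent w i)
    (f : Perm (Fin (n + 1)) → K) : heckeOp q i f w = q * f (w * sTrans i) :=
  if_neg hi

lemma add_heckeOp_apply_mul_sTrans (i : Fin n) (f : Perm (Fin (n + 1)) → K)
    (w : Perm (Fin (n + 1))) :
    (f + heckeOp q i f) (w * sTrans i) = (f + heckeOp q i f) w := by
  simp only [Pi.add_apply, heckeOp_apply, isDescent_mul_sTrans_self, mul_sTrans_mul_sTrans]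
  split_ifs <;> ring

lemma heckeOp_mul_self (i : Fin n) : heckeOp q i * heckeOp q i = q • 1 + (q - 1) • heckeOp q i := by
  refine LinearMap.ext fun f => funext fun w => ?_
  simp only [Module.End.mul_apply, LinearMap.add_apply, LinearMap.smul_apply,
    Module.End.one_apply, Pi.add_apply, Pi.smul_apply, smul_eq_mul, heckeOp_apply,
    isDescent_mul_sTrans_self, mul_sTrans_mul_sTrans]
  split_ifs <;> ring

/- The braid relation compares the coefficients at the six elements of `w ⟨s_i, s_j⟩`; which of the
two cases of `heckeOp` occur is decided by the relative order of three values of `w`. -/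
lemma heckeOp_braid {i j : Fin n} (hij : j.castSucc = i.succ) :
    heckeOp q i * heckeOp q j * heckeOp q i = heckeOp q j * heckeOp q i * heckeOp q j := by
  refine LinearMap.ext fun f => funext fun w => ?_
  obtain ⟨hi_fix, hj_fix⟩ := sTrans_of_castSucc_eq_succ hij
  have hj_move : sTrans j i.succ = j.succ := hij ▸ sTrans_castSucc j
  have hj_back : sTrans j j.succ = i.succ := hij ▸ sTrans_succ j
  have hdist : Nat.dist i j = 1 := by
    have hval := Fin.ext_iff.1 hij
    simp only [Fin.val_castSucc, Fin.val_succ] at hval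
    unfold Nat.dist
    omega
  have hbraid : w * sTrans j * sTrans i * sTrans j = w * sTrans i * sTrans j * sTrans i := by
    simpa only [mul_assoc] using congrArg (w * ·) (braidRelations_sTrans.braid hdist).symm
  simp only [Module.End.mul_apply, heckeOp_apply, IsDescent, Perm.mul_apply, hij, hi_fix, hj_fix,
    hj_move, hj_back, sTrans_castSucc, sTrans_succ, mul_sTrans_mul_sTrans, hbraid]
  have hlt : i.castSucc < i.succ := Fin.castSucc_lt_succ
  have hlt' : i.succ < j.succ := hij ▸ Fin.castSucc_lt_succ
  rcases (w.injective.ne hlt.ne).lt_or_gt with h₁ | h₁ <;>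
    rcases (w.injective.ne hlt'.ne).lt_or_gt with h₂ | h₂ <;>
    rcases (w.injective.ne (hlt.trans hlt').ne).lt_or_gt with h₃ | h₃ <;>
    first
    | order
    | simp only [h₁, h₂, h₃, h₁.not_gt, h₂.not_gt, h₃.not_gt, if_true, if_false] <;> ring

lemma braidRelations_heckeOp : BraidRelations (heckeOp (n := n) q) := by
  refine .of_succ (fun {i j} hij => ?_) (heckeOp_braid q)
  refine LinearMap.ext fun f => funext fun w => ?_
  have hcomm : w * sTrans j * sTrans i = w * sTrans i * sTrans j := by
    rw [mul_assoc, mul_assoc, (braidRelations_sTrans.commute hij).eq]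
  simp only [Module.End.mul_apply, heckeOp_apply, isDescent_mul_sTrans_of_dist hij,
    isDescent_mul_sTrans_of_dist (Nat.dist_comm _ _ ▸ hij), hcomm]
  split_ifs <;> ring

lemma heckeOp_single {w : Perm (Fin (n + 1))} {i : Fin n} (hi : ¬IsDescent w i) :
    heckeOp q i (Pi.single w 1) = Pi.single (w * sTrans i) 1 := by
  ext u
  by_cases hu : IsDescent u i
  · have hne : u ≠ w := by rintro rfl; exact hi hu
    simp [heckeOp_apply_of_isDescent q hu, Pi.single_apply, hne, mul_sTrans_eq_iff]
  · have hne : u ≠ w * sTrans i := by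
      rintro rfl
      exact hu (isDescent_mul_sTrans_self.2 hi)
    simp [heckeOp_apply_of_not_isDescent q hu, hne, mul_sTrans_eq_iff]

end HeckeOperators

section Parabolic

/-- The standard parabolic subgroup of `S_{n+1}` generated by the `s_m` with `m ∈ B`. -/
def parabolic (B : Finset (Fin n)) : Subgroup (Perm (Fin (n + 1))) :=
  Subgroup.closure {p | ∃ m ∈ B, p = sTrans m}

variable {B : Finset (Fin n)} {u w : Perm (Fin (n + 1))} {i : Fin n}

lemma sTrans_mem_parabolic (hi : i ∈ B) : sTrans i ∈ parabolic B :=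
  Subgroup.subset_closure ⟨i, hi, rfl⟩

lemma sTrans_apply_le_castSucc_iff {m : Fin n} (hne : m ≠ i) (p : Fin (n + 1)) :
    sTrans m p ≤ i.castSucc ↔ p ≤ i.castSucc := by
  rw [Fin.ne_iff_vne] at hne
  simp only [sTrans, swap_apply_def, Fin.le_def, Fin.ext_iff, Fin.val_castSucc, Fin.val_succ]
  split_ifs <;> simp only [Fin.val_castSucc, Fin.val_succ] <;> omega

lemma apply_le_castSucc_iff_of_mem_parabolic (hu : u ∈ parabolic B) (hi : i ∉ B)
    (p : Fin (n + 1)) : u p ≤ i.castSucc ↔ p ≤ i.castSucc := by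
  induction hu using Subgroup.closure_induction generalizing p with
  | mem _ h =>
    obtain ⟨m, hm, rfl⟩ := h
    exact sTrans_apply_le_castSucc_iff (by rintro rfl; exact hi hm) p
  | one => rfl
  | mul u v _ _ hu hv => rw [Perm.mul_apply, hu, hv]
  | inv u _ hu => simpa using (hu (u⁻¹ p)).symm

lemma _root_.IsDescent.mem_of_mem_parabolic (hi : IsDescent u i) (hu : u ∈ parabolic B) :
    i ∈ B := by
  by_contra hiB
  have hle : u i.castSucc ≤ i.castSucc :=
    (apply_le_castSucc_iff_of_mem_parabolic hu hiB _).2 le_rfl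
  have hsucc : i.succ ≤ i.castSucc :=
    (apply_le_castSucc_iff_of_mem_parabolic hu hiB _).1 (hi.le.trans hle)
  exact hsucc.not_gt Fin.castSucc_lt_succ

lemma _root_.IsReducedWord.forall_mem_of_mem_parabolic {l : List (Fin n)}
    (hl : IsReducedWord u l) (hu : u ∈ parabolic B) : ∀ i ∈ l, i ∈ B := by
  induction l using List.reverseRecOn generalizing u with
  | nil => simp
  | append_singleton l j ih =>
    obtain ⟨hj, hl⟩ := isReducedWord_concat_iff.1 hl
    have hjB := hj.mem_of_mem_parabolic hu
    have hlB := ih hl (mul_mem hu (sTrans_mem_parabolic hjB))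
    simp only [List.mem_append, List.mem_singleton]
    rintro i (hi | rfl)
    exacts [hlB i hi, hjB]

lemma apply_lt_apply_of_forall_not_isDescent {p p' : Fin (n + 1)} (hlt : p < p')
    (hw : ∀ i : Fin n, p ≤ i.castSucc → i.castSucc < p' → ¬IsDescent w i) : w p < w p' := by
  induction p' using Fin.induction with
  | zero => exact absurd hlt (Fin.not_lt_zero p)
  | succ i ih =>
    have hle : p ≤ i.castSucc := Fin.le_castSucc_iff.2 hlt
    have hstep : w i.castSucc < w i.succ :=
      not_isDescent_iff.1 (hw i hle Fin.castSucc_lt_succ)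
    rcases hle.eq_or_lt with rfl | hlt'
    · exact hstep
    · exact (ih hlt' fun k hpk hki => hw k hpk (hki.trans Fin.castSucc_lt_succ)).trans hstep

/- At the first position `p` moved by `u`, everything between `p` and `u p` belongs to `B`, so `w`
is increasing there. -/
lemma toLex_lt_toLex_mul (hw : ∀ i ∈ B, ¬IsDescent w i) (hu : u ∈ parabolic B) (hne : u ≠ 1) :
    toLex ⇑w < toLex ⇑(w * u) := by
  obtain ⟨p, hp, hmin⟩ := wellFounded_lt.has_min {p | u p ≠ p} <| by
    by_contra hempty
    exact hne (Perm.ext (by simpa [Set.not_nonempty_iff_eq_empty, Set.ext_iff] using hempty))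
  have hfix : ∀ p' < p, u p' = p' := fun p' hp' => not_not.1 fun h => hmin p' h hp'
  have hlt : p < u p := (Ne.lt_or_gt hp).resolve_left fun h => hp (u.injective (hfix _ h))
  refine ⟨p, fun p' hp' => congrArg w (hfix p' hp').symm,
    apply_lt_apply_of_forall_not_isDescent hlt fun i hpi hiu => hw i ?_⟩
  by_contra hiB
  exact hiu.not_ge ((apply_le_castSucc_iff_of_mem_parabolic hu hiB p).2 hpi)

end Parabolic

section SignFunctionals

variable {K : Type*} [CommRing K]

/-- The alternating sum of the values of a function over the left coset `w W_B`. -/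
def cosetSignSum (B : Finset (Fin n)) (w : Perm (Fin (n + 1))) :
    (Perm (Fin (n + 1)) → K) →ₗ[K] K :=
  ∑ u : parabolic B, ((Perm.sign (u : Perm (Fin (n + 1))) : ℤ) : K) • LinearMap.proj (w * u)

lemma cosetSignSum_apply (B : Finset (Fin n)) (w : Perm (Fin (n + 1)))
    (f : Perm (Fin (n + 1)) → K) :
    cosetSignSum B w f =
      ∑ u : parabolic B, ((Perm.sign (u : Perm (Fin (n + 1))) : ℤ) : K) * f (w * u) := by
  simp [cosetSignSum]

lemma cosetSignSum_heckeOp (q : K) {B : Finset (Fin n)} {i : Fin n} (hi : i ∈ B)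
    (w : Perm (Fin (n + 1))) (f : Perm (Fin (n + 1)) → K) :
    cosetSignSum B w (heckeOp q i f) = -cosetSignSum B w f := by
  let s : parabolic B := ⟨sTrans i, sTrans_mem_parabolic hi⟩
  have hsum : cosetSignSum B w (f + heckeOp q i f) = 0 := by
    rw [cosetSignSum_apply]
    refine Finset.sum_involution (fun u _ => u * s) (fun u _ => ?_) (fun u _ _ => ?_)
      (fun _ _ => Finset.mem_univ _) fun u _ => Subtype.ext (mul_sTrans_mul_sTrans _ _)
    · simp only [s, Subgroup.coe_mul, ← mul_assoc, add_heckeOp_apply_mul_sTrans, Perm.sign_mul,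
        (isSwap_sTrans i).sign_eq, mul_neg_one, Units.val_neg, Int.cast_neg]
      ring
    · simpa [s, Subtype.ext_iff] using sTrans_ne_one i
  rw [map_add] at hsum
  exact eq_neg_of_add_eq_zero_right hsum

/-- The functions all of whose alternating coset sums over `W_B` vanish. -/
def signKernel (K : Type*) [CommRing K] (B : Finset (Fin n)) :
    Submodule K (Perm (Fin (n + 1)) → K) :=
  ⨅ w, LinearMap.ker (cosetSignSum B w)

lemma mem_signKernel {B : Finset (Fin n)} {f : Perm (Fin (n + 1)) → K} :
    f ∈ signKernel K B ↔ ∀ w, cosetSignSum B w f = 0 := by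
  simp [signKernel, Submodule.mem_iInf]

/-- The permutations having a descent in each member of a family of sets of positions. -/
def permsWithDescents {ι : Type*} (B : ι → Finset (Fin n)) : Finset (Perm (Fin (n + 1))) :=
  {w | ∀ j, ∃ i ∈ B j, IsDescent w i}

variable {ι : Type*} {B : ι → Finset (Fin n)}

lemma mem_permsWithDescents {w : Perm (Fin (n + 1))} :
    w ∈ permsWithDescents B ↔ ∀ j, ∃ i ∈ B j, IsDescent w i := by
  simp [permsWithDescents]

lemma eq_zero_of_mem_iInf_signKernel {f : Perm (Fin (n + 1)) → K}
    (hf : f ∈ ⨅ j, signKernel K (B j)) (hD : ∀ w ∈ permsWithDescents B, f w = 0) : f = 0 := by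
  ext w
  induction w using (InvImage.wf (fun w : Perm (Fin (n + 1)) => toLex ⇑w) wellFounded_gt).induction
    with
  | _ w ih =>
  by_cases hw : w ∈ permsWithDescents B
  · exact hD w hw
  simp only [mem_permsWithDescents, not_forall, not_exists, not_and] at hw
  obtain ⟨j, hj⟩ := hw
  have hsum := mem_signKernel.1 ((Submodule.mem_iInf _).1 hf j) w
  have hlarger : ∀ u : parabolic (B j), u ≠ 1 → f (w * u) = 0 := fun u hu =>
    ih _ (toLex_lt_toLex_mul hj u.2 (by simpa using hu))
  rw [cosetSignSum_apply, Fintype.sum_eq_single 1 fun u hu => by rw [hlarger u hu, mul_zero]]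
    at hsum
  simpa using hsum

lemma finrank_iInf_signKernel_le [Nontrivial K] :
    finrank K ↥(⨅ j, signKernel K (B j)) ≤ (permsWithDescents B).card := by
  let restrict : ↥(⨅ j, signKernel K (B j)) →ₗ[K] (permsWithDescents B → K) :=
    LinearMap.funLeft K K Subtype.val ∘ₗ Submodule.subtype _
  have hinj : Function.Injective restrict := by
    refine (injective_iff_map_eq_zero _).2 fun f hf => Subtype.ext ?_
    exact eq_zero_of_mem_iInf_signKernel f.2 fun w hw => congrFun hf ⟨w, hw⟩
  simpa using LinearMap.finrank_le_finrank_of_injective hinj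

end SignFunctionals

section LeadingTerms

/-- The function `f` takes the value `1` at `a`, and the rest of its support has smaller degree. -/
def HasLeadingTerm {α β K : Type*} [LT β] [Zero K] [One K] (d : α → β) (f : α → K) (a : α) :
    Prop :=
  f a = 1 ∧ ∀ b, f b ≠ 0 → b = a ∨ d b < d a

lemma linearIndependent_of_hasLeadingTerm {κ α β K : Type*} [LinearOrder β] [Ring K] {d : α → β}
    {F : κ → α → K} {a : κ → α} (ha : Function.Injective a)
    (hF : ∀ k, HasLeadingTerm d (F k) (a k)) : LinearIndependent K F := by
  rw [linearIndependent_iff']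
  intro s c hc
  by_contra! hne
  obtain ⟨k, hk, hmax⟩ := Finset.exists_max_image (s.filter (c · ≠ 0)) (fun k => d (a k)) <| by
    simpa [Finset.filter_nonempty_iff] using hne
  simp only [Finset.mem_filter, and_imp] at hk hmax
  have hothers : ∀ l ∈ s, l ≠ k → (c l • F l) (a k) = 0 := by
    intro l hl hlk
    by_cases hcl : c l = 0
    · simp [hcl]
    have hzero : F l (a k) = 0 := by
      by_contra hne
      rcases (hF l).2 _ hne with h | h
      · exact hlk (ha h.symm)
      · exact (hmax l hl hcl).not_gt h
    simp [hzero]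
  have hcoeff := congrFun hc (a k)
  rw [Finset.sum_apply, Finset.sum_eq_single_of_mem k hk.1 hothers] at hcoeff
  exact hk.2 (by simpa [(hF k).1] using hcoeff)

lemma hasLeadingTerm_single {α β K : Type*} [DecidableEq α] [LT β] [Zero K] [One K]
    (d : α → β) (a : α) :
    HasLeadingTerm d (Pi.single a (1 : K)) a :=
  ⟨Pi.single_eq_same a 1, fun _ hb => Or.inl (not_imp_comm.1 (fun h => Pi.single_eq_of_ne h 1) hb)⟩

lemma HasLeadingTerm.add_heckeOp {K : Type*} [CommRing K] (q : K) {w : Perm (Fin (n + 1))}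
    {i : Fin n} {f : Perm (Fin (n + 1)) → K} (hi : IsDescent w i)
    (hf : HasLeadingTerm numInversions f (w * sTrans i)) :
    HasLeadingTerm numInversions (f + heckeOp q i f) w := by
  obtain ⟨hlead, hsupp⟩ := hf
  have hlen := hi.numInversions_eq
  constructor
  · have hw : f w = 0 := by
      by_contra hne
      rcases hsupp w hne with h | h
      · rw [← h] at hlen
        omega
      · omega
    simp [heckeOp_apply_of_isDescent q hi, hlead, hw]
  · intro u hu
    have hor : f u ≠ 0 ∨ f (u * sTrans i) ≠ 0 := by
      contrapose! hu
      simp [heckeOp_apply, hu]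
    rcases hor with hne | hne <;> rcases hsupp _ hne with h | h
    · exact Or.inr (by rw [h]; omega)
    · exact Or.inr (by omega)
    · exact Or.inl (mul_right_cancel h)
    · have hle := numInversions_le_mul_sTrans_add_one u i
      exact Or.inr (by omega)

end LeadingTerms

section BraidsAndTiesAlgebra

lemma braidRelations_bg : BraidRelations (bg n) where
  commute h := by
    simpa only [commute_iff_eq, bg, map_mul] using
      RingQuot.mkAlgHom_rel Kv (BTRel.gg_comm _ _ h)
  braid h := by
    simpa only [bg, map_mul] using RingQuot.mkAlgHom_rel Kv (BTRel.braid _ _ h)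

lemma commute_be_be (i j : Fin n) : Commute (be n i) (be n j) := by
  simpa only [commute_iff_eq, be, map_mul] using
    RingQuot.mkAlgHom_rel Kv (BTRel.ee_comm i j)

lemma isIdempotentElem_be (i : Fin n) : IsIdempotentElem (be n i) := by
  simpa only [IsIdempotentElem, be, map_mul] using
    RingQuot.mkAlgHom_rel Kv (BTRel.e_idem i)

lemma commute_be_bg_self (i : Fin n) : Commute (be n i) (bg n i) := by
  simpa only [commute_iff_eq, bg, be, map_mul] using
    RingQuot.mkAlgHom_rel Kv (BTRel.eg_same i)

lemma commute_be_bg_of_dist {i j : Fin n} (h : 2 ≤ Nat.dist i j) :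
    Commute (be n i) (bg n j) := by
  simpa only [commute_iff_eq, bg, be, map_mul] using
    RingQuot.mkAlgHom_rel Kv (BTRel.eg_comm i j h)

lemma commute_be_mul_be_bg_of_dist_eq_one {i j : Fin n} (h : Nat.dist i j = 1) :
    Commute (be n i * be n j) (bg n j) := by
  have h₁ := RingQuot.mkAlgHom_rel Kv (BTRel.eeg₁ i j h)
  have h₂ := RingQuot.mkAlgHom_rel Kv (BTRel.eeg₂ i j h)
  simp only [map_mul] at h₁ h₂
  exact h₁.trans (h₂.trans (mul_assoc _ _ _))

lemma commute_be_mul_be_bg (i j : Fin n) : Commute (be n i * be n j) (bg n j) := by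
  rcases eq_or_ne i j with rfl | hne
  · rw [(isIdempotentElem_be i).eq]
    exact commute_be_bg_self i
  have hdist : 2 ≤ Nat.dist i j ∨ Nat.dist i j = 1 := by
    rw [Fin.ne_iff_vne] at hne
    unfold Nat.dist
    omega
  rcases hdist with h | h
  · exact (commute_be_bg_of_dist h).mul_left (commute_be_bg_self j)
  · exact commute_be_mul_be_bg_of_dist_eq_one h

lemma bg_mul_bg (i : Fin n) :
    bg n i * bg n i = 1 + (vv ^ 2 - 1) • (be n i * (1 + bg n i)) := by
  simpa only [bg, be, map_mul, map_add, map_one, map_smul] using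
    RingQuot.mkAlgHom_rel Kv (BTRel.quad i)

/-- The idempotent `∏_{i ∈ I} e_i`. -/
def tieProd (I : Finset (Fin n)) : BT n := ((I.sort (· ≤ ·)).map (be n)).prod

variable {I : Finset (Fin n)} {i : Fin n}

lemma be_mul_tieProd (hi : i ∈ I) : be n i * tieProd I = tieProd I := by
  have hmem : be n i ∈ (I.sort (· ≤ ·)).map (be n) :=
    List.mem_map_of_mem ((Finset.mem_sort _).2 hi)
  have herase := List.prod_erase_of_comm hmem <| by
    simp only [List.mem_map]
    rintro _ ⟨a, _, rfl⟩ _ ⟨b, _, rfl⟩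
    exact commute_be_be a b
  rw [tieProd, ← herase, ← mul_assoc, (isIdempotentElem_be i).eq]

lemma commute_be_mul_prod_bg (i : Fin n) (l : List (Fin n)) :
    Commute (be n i * (l.map (be n)).prod) (bg n i) := by
  induction l with
  | nil => simpa using commute_be_bg_self i
  | cons m l ih =>
    have hsplit : be n i * ((m :: l).map (be n)).prod =
        (be n m * be n i) * (be n i * (l.map (be n)).prod) := by
      rw [List.map_cons, List.prod_cons, ← mul_assoc, (commute_be_be i m).eq, ← mul_assoc,
        mul_assoc (be n m) (be n i) (be n i), (isIdempotentElem_be i).eq]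
    exact hsplit ▸ (commute_be_mul_be_bg m i).mul_left ih

lemma commute_tieProd_bg (hi : i ∈ I) : Commute (tieProd I) (bg n i) := by
  rw [← be_mul_tieProd hi]
  exact commute_be_mul_prod_bg i _

lemma bg_mul_bg_mul_tieProd (hi : i ∈ I) :
    bg n i * bg n i * tieProd I = vv ^ 2 • tieProd I + (vv ^ 2 - 1) • (bg n i * tieProd I) := by
  have htie : be n i * (1 + bg n i) * tieProd I = tieProd I + bg n i * tieProd I := by
    rw [mul_assoc, add_mul, one_mul, mul_add, be_mul_tieProd hi, ← (commute_tieProd_bg hi).eq,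
      ← mul_assoc, be_mul_tieProd hi]
  rw [bg_mul_bg, add_mul, one_mul, smul_mul_assoc, htie, smul_add, ← add_assoc, sub_smul, one_smul,
    add_sub_cancel]

/-- The homomorphism from the free algebra that induces `heckeRep`. -/
def freeHeckeRep (n : ℕ) :
    FreeAlgebra Kv (Fin n ⊕ Fin n) →ₐ[Kv] (End Kv (Perm (Fin (n + 1)) → Kv))ᵐᵒᵖ :=
  FreeAlgebra.lift Kv (Sum.elim (fun i => .op (heckeOp (vv ^ 2) i)) fun _ => 1)

@[simp]
lemma freeHeckeRep_bgF (i : Fin n) : freeHeckeRep n (bgF n i) = .op (heckeOp (vv ^ 2) i) := by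
  simp [freeHeckeRep, bgF]

@[simp]
lemma freeHeckeRep_beF (i : Fin n) : freeHeckeRep n (beF n i) = 1 := by
  simp [freeHeckeRep, beF]

lemma freeHeckeRep_eq_of_rel {x y : FreeAlgebra Kv (Fin n ⊕ Fin n)} (h : BTRel n x y) :
    freeHeckeRep n x = freeHeckeRep n y := by
  induction h with
  | gg_comm i j h =>
    simp only [map_mul, freeHeckeRep_bgF, ← MulOpposite.op_mul,
      ((braidRelations_heckeOp _).commute h).eq]
  | braid i j h =>
    simp only [map_mul, freeHeckeRep_bgF, ← MulOpposite.op_mul, ← mul_assoc,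
      (braidRelations_heckeOp _).braid h]
  | quad i =>
    simp only [map_mul, map_add, map_one, map_smul, freeHeckeRep_bgF, freeHeckeRep_beF, one_mul,
      ← MulOpposite.op_mul, heckeOp_mul_self, MulOpposite.op_add, MulOpposite.op_smul,
      MulOpposite.op_one]
    rw [smul_add, ← add_assoc, sub_smul, one_smul, add_sub_cancel]
  | _ => simp only [map_mul, freeHeckeRep_bgF, freeHeckeRep_beF, one_mul, mul_one]

/-- The representation of `ℰ_n(v)` on the right regular module of the Hecke algebra with parameter
`v²`, through which every `e_i` acts as the identity. Right actions are encoded by the opposite of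
the endomorphism algebra. -/
def heckeRep (n : ℕ) : BT n →ₐ[Kv] (End Kv (Perm (Fin (n + 1)) → Kv))ᵐᵒᵖ :=
  RingQuot.liftAlgHom Kv ⟨freeHeckeRep n, fun _ _ => freeHeckeRep_eq_of_rel⟩

@[simp]
lemma heckeRep_bg (i : Fin n) : heckeRep n (bg n i) = .op (heckeOp (vv ^ 2) i) := by
  rw [heckeRep, bg, RingQuot.liftAlgHom_mkAlgHom_apply, freeHeckeRep_bgF]

@[simp]
lemma heckeRep_be (i : Fin n) : heckeRep n (be n i) = 1 := by
  rw [heckeRep, be, RingQuot.liftAlgHom_mkAlgHom_apply, freeHeckeRep_beF]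

@[simp]
lemma heckeRep_tieProd (I : Finset (Fin n)) : heckeRep n (tieProd I) = 1 := by
  rw [tieProd, map_list_prod]
  exact List.prod_eq_one (by simp)

end BraidsAndTiesAlgebra

section HeckeEmbedding

/-- The element `g_w` of `ℰ_n(v)`. -/
def bgPerm (w : Perm (Fin (n + 1))) : BT n := ((exists_isReducedWord w).choose.map (bg n)).prod

lemma _root_.IsReducedWord.prod_map_bg {w : Perm (Fin (n + 1))} {l : List (Fin n)}
    (hl : IsReducedWord w l) : (l.map (bg n)).prod = bgPerm w :=
  braidRelations_bg.prod_map_eq hl (exists_isReducedWord w).choose_spec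

lemma bgPerm_one : bgPerm (1 : Perm (Fin (n + 1))) = 1 :=
  (isReducedWord_nil_iff.2 rfl).prod_map_bg.symm

lemma bgPerm_sTrans (i : Fin n) : bgPerm (sTrans i) = bg n i := by
  simp [← (isReducedWord_singleton i).prod_map_bg]

lemma bgPerm_mul_sTrans {w : Perm (Fin (n + 1))} {i : Fin n} (hi : ¬IsDescent w i) :
    bgPerm (w * sTrans i) = bgPerm w * bg n i := by
  obtain ⟨l, hl⟩ := exists_isReducedWord w
  have hli : IsReducedWord (w * sTrans i) (l ++ [i]) := isReducedWord_concat_iff.2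
    ⟨isDescent_mul_sTrans_self.2 hi, by rwa [mul_sTrans_mul_sTrans]⟩
  simp [← hl.prod_map_bg, ← hli.prod_map_bg]

lemma heckeRep_bgPerm_single_one (w : Perm (Fin (n + 1))) :
    (heckeRep n (bgPerm w)).unop (Pi.single 1 1) = Pi.single w 1 := by
  induction w using descentInduction with
  | one => simp [bgPerm_one]
  | mul_sTrans w i hi ih => simp [bgPerm_mul_sTrans hi, ih, heckeOp_single _ hi]

/-- The embedding of the right regular module of the Hecke algebra into `ℰ_n(v)` sending the basis
element indexed by `w` to `g_w ∏_{i ∈ I} e_i`. -/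
def heckeEmbedding (I : Finset (Fin n)) : (Perm (Fin (n + 1)) → Kv) →ₗ[Kv] BT n :=
  Fintype.linearCombination Kv fun w => bgPerm w * tieProd I

variable {I : Finset (Fin n)}

@[simp]
lemma heckeEmbedding_single (w : Perm (Fin (n + 1))) :
    heckeEmbedding I (Pi.single w 1) = bgPerm w * tieProd I := by
  simp [heckeEmbedding]

lemma heckeRep_heckeEmbedding_single_one (f : Perm (Fin (n + 1)) → Kv) :
    (heckeRep n (heckeEmbedding I f)).unop (Pi.single 1 1) = f := by
  conv_rhs => rw [pi_eq_sum_univ' f]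
  simp [heckeEmbedding, Fintype.linearCombination_apply, heckeRep_bgPerm_single_one,
    LinearMap.sum_apply]

lemma heckeEmbedding_injective : Function.Injective (heckeEmbedding I) :=
  Function.LeftInverse.injective
    (g := fun x => (heckeRep n x).unop (Pi.single 1 1)) heckeRep_heckeEmbedding_single_one

lemma heckeEmbedding_mul_bg {i : Fin n} (hi : i ∈ I) (f : Perm (Fin (n + 1)) → Kv) :
    heckeEmbedding I f * bg n i = heckeEmbedding I (heckeOp (vv ^ 2) i f) := by
  have hasc : ∀ w, ¬IsDescent w i → heckeEmbedding I (Pi.single w 1) * bg n i =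
      heckeEmbedding I (heckeOp (vv ^ 2) i (Pi.single w 1)) := fun w hw => by
    rw [heckeOp_single _ hw, heckeEmbedding_single, heckeEmbedding_single, bgPerm_mul_sTrans hw,
      mul_assoc, (commute_tieProd_bg hi).eq, ← mul_assoc]
  suffices LinearMap.mulRight Kv (bg n i) ∘ₗ heckeEmbedding I =
      heckeEmbedding I ∘ₗ heckeOp (vv ^ 2) i from LinearMap.congr_fun this f
  refine LinearMap.pi_ext' fun w => LinearMap.ext_ring ?_
  change heckeEmbedding I (Pi.single w 1) * bg n i =
      heckeEmbedding I (heckeOp (vv ^ 2) i (Pi.single w 1))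
  by_cases hw : IsDescent w i
  · have hw' : ¬IsDescent (w * sTrans i) i := by rwa [isDescent_mul_sTrans_self, not_not]
    have hsingle : Pi.single w 1 = heckeOp (vv ^ 2) i (Pi.single (w * sTrans i) 1) := by
      rw [heckeOp_single _ hw', mul_sTrans_mul_sTrans]
    rw [hsingle, ← Module.End.mul_apply, heckeOp_mul_self, ← hasc _ hw']
    simp only [LinearMap.add_apply, LinearMap.smul_apply, Module.End.one_apply, map_add, map_smul,
      ← hasc _ hw', heckeEmbedding_single, mul_assoc]
    rw [((commute_tieProd_bg hi).mul_right (commute_tieProd_bg hi)).eq, bg_mul_bg_mul_tieProd hi,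
      (commute_tieProd_bg hi).eq, mul_add, mul_smul_comm, mul_smul_comm]
  · exact hasc w hw

lemma heckeEmbedding_mul {x : BT n} (hx : x ∈ Algebra.adjoin Kv (bg n '' I))
    (f : Perm (Fin (n + 1)) → Kv) :
    heckeEmbedding I f * x = heckeEmbedding I ((heckeRep n x).unop f) := by
  induction hx using Algebra.adjoin_induction generalizing f with
  | mem x hx =>
    obtain ⟨i, hi, rfl⟩ := hx
    simpa using heckeEmbedding_mul_bg hi f
  | algebraMap c => simp [Algebra.algebraMap_eq_smul_one]
  | add x y _ _ hx hy => simp [mul_add, hx, hy]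
  | mul x y _ _ hx hy => simp [← mul_assoc, hx, hy]

lemma commute_tieProd {x : BT n} (hx : x ∈ Algebra.adjoin Kv (bg n '' I)) :
    Commute (tieProd I) x :=
  Algebra.commute_of_mem_adjoin_of_forall_mem_commute hx <| by
    rintro _ ⟨i, hi, rfl⟩
    exact commute_tieProd_bg hi

lemma bgPerm_mul_mul_tieProd {x : BT n} (hx : x ∈ Algebra.adjoin Kv (bg n '' I))
    (w : Perm (Fin (n + 1))) :
    bgPerm w * x * tieProd I = heckeEmbedding I ((heckeRep n x).unop (Pi.single w 1)) := by
  rw [← heckeEmbedding_mul hx, heckeEmbedding_single, mul_assoc, mul_assoc, (commute_tieProd hx).eq]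

end HeckeEmbedding

section Generators

variable {B : Finset (Fin n)}

lemma cosetSignSum_heckeRep_prod_map_bg {l : List (Fin n)} (hl : ∀ i ∈ l, i ∈ B)
    (w : Perm (Fin (n + 1))) (f : Perm (Fin (n + 1)) → Kv) :
    cosetSignSum B w ((heckeRep n (l.map (bg n)).prod).unop f) =
      ((Perm.sign (wordProd l) : ℤ) : Kv) * cosetSignSum B w f := by
  induction l using List.reverseRecOn with
  | nil => simp
  | append_singleton l i ih =>
    simp only [List.mem_append, List.mem_singleton] at hl
    have hl' := ih fun j hj => hl j (Or.inl hj)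
    simp [cosetSignSum_heckeOp _ (hl i (Or.inr rfl)), hl', (isSwap_sTrans i).sign_eq]

lemma heckeRep_one_add_bgPerm_mem_signKernel {r : Perm (Fin (n + 1))} (hr : Perm.sign r = -1)
    (hrB : r ∈ parabolic B) (f : Perm (Fin (n + 1)) → Kv) :
    (heckeRep n (1 + bgPerm r)).unop f ∈ signKernel Kv B := by
  obtain ⟨l, hl⟩ := exists_isReducedWord r
  refine mem_signKernel.2 fun w => ?_
  have hprod : wordProd l = r := hl.1
  simp [← hl.prod_map_bg, hprod, hr,
    cosetSignSum_heckeRep_prod_map_bg (hl.forall_mem_of_mem_parabolic hrB)]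

lemma bgPerm_mem_adjoin {r : Perm (Fin (n + 1))} (hr : r ∈ parabolic B) :
    bgPerm r ∈ Algebra.adjoin Kv (bg n '' B) := by
  obtain ⟨l, hl⟩ := exists_isReducedWord r
  rw [← hl.prod_map_bg]
  refine Subalgebra.list_prod_mem _ fun x hx => ?_
  obtain ⟨i, hi, rfl⟩ := List.mem_map.1 hx
  exact Algebra.subset_adjoin ⟨i, hl.forall_mem_of_mem_parabolic hr i hi, rfl⟩

/-- Every element of `B` is at distance at least two from every element of `B'`, so that `W_B` and
`W_{B'}` commute elementwise. -/
def AreSeparated (B B' : Finset (Fin n)) : Prop := ∀ i ∈ B, ∀ i' ∈ B', 2 ≤ Nat.dist i i'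

lemma AreSeparated.commute_bgPerm {B' : Finset (Fin n)} (hBB' : AreSeparated B B')
    {r r' : Perm (Fin (n + 1))} (hr : r ∈ parabolic B) (hr' : r' ∈ parabolic B') :
    Commute (bgPerm r) (bgPerm r') := by
  refine Algebra.commute_of_mem_adjoin_of_forall_mem_commute (bgPerm_mem_adjoin hr') ?_
  rintro _ ⟨i', hi', rfl⟩
  refine (Algebra.commute_of_mem_adjoin_of_forall_mem_commute (bgPerm_mem_adjoin hr) ?_).symm
  rintro _ ⟨i, hi, rfl⟩
  exact (braidRelations_bg.commute (hBB' i hi i' hi')).symm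

variable {k : ℕ}

/-- The product `(1 + g_{r_1}) ⋯ (1 + g_{r_k})`. -/
def oneAddProd (r : Fin k → Perm (Fin (n + 1))) : BT n :=
  ((List.finRange k).map fun j => 1 + bgPerm (r j)).prod

variable {B : Fin k → Finset (Fin n)} {r : Fin k → Perm (Fin (n + 1))}

lemma oneAddProd_mem_adjoin {I : Finset (Fin n)} (hBI : ∀ j, B j ⊆ I)
    (hr : ∀ j, r j ∈ parabolic (B j)) : oneAddProd r ∈ Algebra.adjoin Kv (bg n '' I) := by
  refine Subalgebra.list_prod_mem _ fun x hx => ?_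
  obtain ⟨j, -, rfl⟩ := List.mem_map.1 hx
  exact add_mem (one_mem _)
    (Algebra.adjoin_mono (Set.image_mono (by exact_mod_cast hBI j)) (bgPerm_mem_adjoin (hr j)))

lemma exists_list_prod_eq_mul {M : Type*} [Monoid M] {l : List M} {a : M} (ha : a ∈ l)
    (hl : ∀ x ∈ l, Commute a x) : ∃ b, l.prod = b * a := by
  obtain ⟨s, t, rfl⟩ := List.append_of_mem ha
  have hcomm : Commute a t.prod := Commute.list_prod_right _ _ fun x hx => hl x (by simp [hx])
  exact ⟨s.prod * t.prod, by rw [List.prod_append, List.prod_cons, hcomm.eq, mul_assoc]⟩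

lemma exists_oneAddProd_eq_mul (hB : Pairwise fun j j' => AreSeparated (B j) (B j'))
    (hr : ∀ j, r j ∈ parabolic (B j)) (j : Fin k) :
    ∃ x, oneAddProd r = x * (1 + bgPerm (r j)) := by
  refine exists_list_prod_eq_mul (List.mem_map_of_mem (List.mem_finRange j)) fun x hx => ?_
  obtain ⟨j', -, rfl⟩ := List.mem_map.1 hx
  have hcomm : Commute (bgPerm (r j)) (bgPerm (r j')) := by
    rcases eq_or_ne j j' with rfl | hne
    · exact Commute.refl _
    · exact (hB hne).commute_bgPerm (hr j) (hr j')
  exact (Commute.one_left _).add_left ((Commute.one_right _).add_right hcomm)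

lemma heckeRep_oneAddProd_mem_iInf_signKernel
    (hB : Pairwise fun j j' => AreSeparated (B j) (B j'))
    (hr : ∀ j, (r j).IsSwap ∧ r j ∈ parabolic (B j)) (f : Perm (Fin (n + 1)) → Kv) :
    (heckeRep n (oneAddProd r)).unop f ∈ ⨅ j, signKernel Kv (B j) := by
  refine (Submodule.mem_iInf _).2 fun j => ?_
  obtain ⟨x, hx⟩ := exists_oneAddProd_eq_mul hB (fun j => (hr j).2) j
  rw [hx, map_mul, MulOpposite.unop_mul, Module.End.mul_apply]
  exact heckeRep_one_add_bgPerm_mem_signKernel (hr j).1.sign_eq (hr j).2 _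

lemma exists_hasLeadingTerm_heckeRep {l : List (Fin n)}
    (hl : l.Pairwise fun i j : Fin n => 2 ≤ Nat.dist i j) {w : Perm (Fin (n + 1))}
    (hw : ∀ i ∈ l, IsDescent w i) :
    ∃ w', HasLeadingTerm numInversions
      ((heckeRep n (l.map (1 + bg n ·)).prod).unop (Pi.single w' 1)) w := by
  induction l using List.reverseRecOn generalizing w with
  | nil => exact ⟨w, by simpa using hasLeadingTerm_single numInversions w⟩
  | append_singleton l i ih =>
    simp only [List.pairwise_append, List.mem_append, List.mem_singleton] at hl hw
    obtain ⟨w', hw'⟩ := ih hl.1 (w := w * sTrans i) fun j hj =>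
      (isDescent_mul_sTrans_of_dist (Nat.dist_comm _ _ ▸ hl.2.2 j hj i rfl)).2 (hw j (Or.inl hj))
    exact ⟨w', by simpa using hw'.add_heckeOp (vv ^ 2) (hw i (Or.inr rfl))⟩

/-- The generators `g_w (1 + g_{r_1}) ⋯ (1 + g_{r_k}) ∏ e_i` of the span, read in the right regular
module of the Hecke algebra. -/
def heckeGenerators (B : Fin k → Finset (Fin n)) : Set (Perm (Fin (n + 1)) → Kv) :=
  {f | ∃ w r, (∀ j, (r j).IsSwap ∧ r j ∈ parabolic (B j)) ∧
    f = (heckeRep n (oneAddProd r)).unop (Pi.single w 1)}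

lemma span_heckeGenerators_le (hB : Pairwise fun j j' => AreSeparated (B j) (B j')) :
    Submodule.span Kv (heckeGenerators B) ≤ ⨅ j, signKernel Kv (B j) := by
  refine Submodule.span_le.2 ?_
  rintro _ ⟨w, r, hr, rfl⟩
  exact heckeRep_oneAddProd_mem_iInf_signKernel hB hr _

lemma exists_mem_heckeGenerators_hasLeadingTerm
    (hB : Pairwise fun j j' => AreSeparated (B j) (B j')) {w : Perm (Fin (n + 1))}
    (hw : w ∈ permsWithDescents B) :
    ∃ f ∈ heckeGenerators B, HasLeadingTerm numInversions f w := by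
  choose m hmB hm using mem_permsWithDescents.1 hw
  have hpairwise : ((List.finRange k).map m).Pairwise fun i i' : Fin n => 2 ≤ Nat.dist i i' :=
    List.pairwise_map.2 <| (List.nodup_finRange k).imp fun hne => hB hne _ (hmB _) _ (hmB _)
  obtain ⟨w', hw'⟩ := exists_hasLeadingTerm_heckeRep hpairwise (w := w) (by simpa using hm)
  refine ⟨_, ⟨w', fun j => sTrans (m j),
    fun j => ⟨isSwap_sTrans _, sTrans_mem_parabolic (hmB j)⟩, rfl⟩, ?_⟩
  simpa [oneAddProd, bgPerm_sTrans, Function.comp_def] using hw'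

lemma card_permsWithDescents_le_finrank
    (hB : Pairwise fun j j' => AreSeparated (B j) (B j')) :
    (permsWithDescents B).card ≤ finrank Kv (Submodule.span Kv (heckeGenerators B)) := by
  choose F hFmem hF using fun w : permsWithDescents B =>
    exists_mem_heckeGenerators_hasLeadingTerm hB w.2
  have hindep : LinearIndependent Kv F :=
    linearIndependent_of_hasLeadingTerm Subtype.val_injective hF
  calc (permsWithDescents B).card
      = finrank Kv (Submodule.span Kv (Set.range F)) := by
        rw [finrank_span_eq_card hindep, Fintype.card_coe]
    _ ≤ finrank Kv (Submodule.span Kv (heckeGenerators B)) :=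
        Submodule.finrank_mono (Submodule.span_mono (Set.range_subset_iff.2 hFmem))

lemma finrank_span_heckeGenerators (hB : Pairwise fun j j' => AreSeparated (B j) (B j')) :
    finrank Kv (Submodule.span Kv (heckeGenerators B)) = (permsWithDescents B).card :=
  le_antisymm ((Submodule.finrank_mono (span_heckeGenerators_le hB)).trans
    finrank_iInf_signKernel_le) (card_permsWithDescents_le_finrank hB)

/-- The elements `g_w (1 + g_{r_1}) ⋯ (1 + g_{r_k}) ∏_{i ∈ I} e_i` of `ℰ_n(v)`, for
`w ∈ S_{n+1}` and transpositions `r_j ∈ W_{B_j}`, with every `g_u` given by an arbitrary reduced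
word. -/
def braidTieGenerators (I : Finset (Fin n)) (B : Fin k → Finset (Fin n)) : Set (BT n) :=
  {x | ∃ w lw, IsReducedWord w lw ∧ ∃ (r : Fin k → Perm (Fin (n + 1))) (lr : Fin k → List (Fin n)),
    (∀ j, (r j).IsSwap ∧ r j ∈ parabolic (B j)) ∧ (∀ j, IsReducedWord (r j) (lr j)) ∧
    x = (lw.map (bg n)).prod *
      ((List.finRange k).map fun j => 1 + ((lr j).map (bg n)).prod).prod * tieProd I}

lemma mem_braidTieGenerators {I : Finset (Fin n)} {x : BT n} :
    x ∈ braidTieGenerators I B ↔ ∃ w r, (∀ j, (r j).IsSwap ∧ r j ∈ parabolic (B j)) ∧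
      x = bgPerm w * oneAddProd r * tieProd I := by
  constructor
  · rintro ⟨w, lw, hlw, r, lr, hr, hlr, rfl⟩
    exact ⟨w, r, hr, by simp only [hlw.prod_map_bg, (hlr _).prod_map_bg, oneAddProd]⟩
  · rintro ⟨w, r, hr, rfl⟩
    obtain ⟨lw, hlw⟩ := exists_isReducedWord w
    choose lr hlr using fun j => exists_isReducedWord (r j)
    exact ⟨w, lw, hlw, r, lr, hr, hlr,
      by simp only [hlw.prod_map_bg, (hlr _).prod_map_bg, oneAddProd]⟩

lemma image_heckeEmbedding_heckeGenerators {I : Finset (Fin n)} (hBI : ∀ j, B j ⊆ I) :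
    heckeEmbedding I '' heckeGenerators B = braidTieGenerators I B := by
  ext x
  rw [mem_braidTieGenerators]
  constructor
  · rintro ⟨_, ⟨w, r, hr, rfl⟩, rfl⟩
    exact ⟨w, r, hr,
      (bgPerm_mul_mul_tieProd (oneAddProd_mem_adjoin hBI fun j => (hr j).2) w).symm⟩
  · rintro ⟨w, r, hr, rfl⟩
    exact ⟨_, ⟨w, r, hr, rfl⟩,
      (bgPerm_mul_mul_tieProd (oneAddProd_mem_adjoin hBI fun j => (hr j).2) w).symm⟩

end Generators

section Blocks

variable {I B B' : Finset (Fin n)}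

lemma _root_.IsBlock.subset (hB : IsBlock I B) : B ⊆ I := by
  obtain ⟨_, _, _, _, h, _⟩ := hB
  exact h

lemma mem_blocksOf : B ∈ blocksOf I ↔ IsBlock I B := by
  simpa [blocksOf] using IsBlock.subset

lemma _root_.IsBlock.mem_iff_uIcc_subset (hB : IsBlock I B) {i : Fin n} (hi : i ∈ B) (j : Fin n) :
    j ∈ B ↔ Finset.uIcc i j ⊆ I := by
  obtain ⟨a, b, -, rfl, hI, ha, hb⟩ := hB
  refine ⟨fun hj => (Finset.uIcc_subset_Icc hi hj).trans hI, fun hij => ?_⟩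
  rw [Finset.mem_Icc] at hi ⊢
  constructor <;> by_contra! hj
  · refine ha ⟨a - 1, by omega⟩ (by simp; omega) (hij (Finset.mem_uIcc'.2 (Or.inr ?_)))
    simp only [Fin.le_def, Fin.lt_def] at hi hj ⊢
    omega
  · refine hb ⟨b + 1, by omega⟩ rfl (hij (Finset.mem_uIcc'.2 (Or.inl ?_)))
    simp only [Fin.le_def, Fin.lt_def] at hi hj ⊢
    omega

lemma _root_.IsBlock.areSeparated (hB : IsBlock I B) (hB' : IsBlock I B') (hne : B ≠ B') :
    AreSeparated B B' := by
  intro i hi j hj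
  by_contra! hdist
  have hij : Finset.uIcc i j ⊆ I := by
    intro x hx
    have hx : x = i ∨ x = j := by
      simp only [Finset.mem_uIcc', Fin.le_def, Fin.ext_iff] at hx ⊢
      unfold Nat.dist at hdist
      omega
    rcases hx with rfl | rfl
    exacts [hB.subset hi, hB'.subset hj]
  have hjB : j ∈ B := (hB.mem_iff_uIcc_subset hi j).2 hij
  refine hne (Finset.ext fun x => ?_)
  rw [hB.mem_iff_uIcc_subset hjB, hB'.mem_iff_uIcc_subset hj]

lemma DIval_eq_card_permsWithDescents {ι : Type*} {B : ι → Finset (Fin n)}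
    (hBmem : ∀ j, B j ∈ blocksOf I) (hBsurj : ∀ b ∈ blocksOf I, ∃ j, B j = b) :
    DIval I = (permsWithDescents B).card := by
  refine congrArg _ (Finset.filter_congr fun w _ => ⟨fun hw j => hw _ (hBmem j), ?_⟩)
  intro hw b hb
  obtain ⟨j, rfl⟩ := hBsurj b hb
  exact hw j

end Blocks

end BraidsAndTies

open BraidsAndTies

theorem span_dimension_eq_DI_general {n k : ℕ} {I : Finset (Fin n)} {B : Fin k → Finset (Fin n)}
    (hBI : ∀ j, B j ⊆ I) (hB : Pairwise fun j j' => AreSeparated (B j) (B j')) :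
    Module.finrank Kv (Submodule.span Kv (braidTieGenerators I B)) =
      (permsWithDescents B).card := by
  rw [← finrank_span_heckeGenerators hB, ← image_heckeEmbedding_heckeGenerators hBI,
    Submodule.span_image]
  exact (Submodule.equivMapOfInjective _ heckeEmbedding_injective _).finrank_eq.symm

/-- Let `I ⊆ {1,…,n}` have contiguous blocks `B_1, …, B_k`. The
`ℂ(v)`-span in `ℰ_n(v)` of the elements `g_w · (1 + g_{r_1}) ⋯ (1 + g_{r_k}) · ∏_{i∈I} e_i`,
over all `w ∈ S_{n+1}` and all transpositions `r_j ∈ W_{B_j}`, has dimension `D_I`. -/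
theorem span_dimension_eq_DI (n : ℕ) (hn : 1 ≤ n) (I : Finset (Fin n))
    (k : ℕ) (B : Fin k → Finset (Fin n))
    (hBmem : ∀ j, B j ∈ blocksOf I) (hBinj : Function.Injective B)
    (hBsurj : ∀ b ∈ blocksOf I, ∃ j, B j = b) :
    Module.finrank Kv
        ↥(Submodule.span Kv
          {x : BT n |
            ∃ (w : Equiv.Perm (Fin (n + 1))) (lw : List (Fin n)),
              IsReducedWord w lw ∧
              ∃ (r : Fin k → Equiv.Perm (Fin (n + 1))) (lr : Fin k → List (Fin n)),
                (∀ j, (r j).IsSwap ∧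
                  r j ∈ Subgroup.closure
                    {p : Equiv.Perm (Fin (n + 1)) | ∃ m ∈ B j, p = sTrans m}) ∧
                (∀ j, IsReducedWord (r j) (lr j)) ∧
                x = (lw.map (bg n)).prod *
                      ((List.finRange k).map (fun j => 1 + ((lr j).map (bg n)).prod)).prod *
                      ((I.sort (· ≤ ·)).map (be n)).prod}) =
      DIval I := by
  have hblock : ∀ j, IsBlock I (B j) := fun j => mem_blocksOf.1 (hBmem j)
  rw [DIval_eq_card_permsWithDescents hBmem hBsurj]
  exact span_dimension_eq_DI_general (fun j => (hblock j).subset) fun j j' hne =>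
    (hblock j).areSeparated (hblock j') (hBinj.ne hne)
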